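/- Let Ω be a nonempty open subset of ℝ², ρ a C¹ moment weight function on Ω satisfying the Pearson equation div(ρΦ) = ρ(ψ₁,ψ₂) on Ω, and let u be a C¹ function on Ω with u ∈ L²(Ω,ρ) and ∇u ∈ L²(Ω,ρΦ). Then for every pair v = (v₁,v₂) of real polynomials in x₁,x₂, the function div(u ρΦ v) is integrable on Ω and ∫_Ω |div(u ρΦ v)| dx₁dx₂ ≤ C ‖u‖_{2,ρ} + ‖∇u‖_{2,ρΦ} ‖v‖_{2,ρΦ}, where C = (∫_Ω K² ρ dx₁dx₂)^{1/2} with K = ψ₁v₁ + ψ₂v₂ + φ_{11}∂_{x₁}v₁ + φ_{21}∂_{x₂}v₁ + φ_{12}∂_{x₁}v₂ + φ_{22}∂_{x₂}v₂. -/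

import Mathlib

open MeasureTheory Filter

noncomputable section

abbrev Poly2 := MvPolynomial (Fin 2) ℝ

/-- Evaluation of a two-variable real polynomial at a point of `ℝ × ℝ`. -/
def pev (p : Poly2) (x : ℝ × ℝ) : ℝ := MvPolynomial.eval ![x.1, x.2] p

/-- `uᵗ Φ v` where `Φ` is the matrix with polynomial entries `p11 p12 p21 p22`. -/
def bilPhi (p11 p12 p21 p22 : Poly2) (x u v : ℝ × ℝ) : ℝ :=
  u.1 * (pev p11 x * v.1 + pev p12 x * v.2) + u.2 * (pev p21 x * v.1 + pev p22 x * v.2)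

/-- The (classical) gradient of a two-variable polynomial. -/
def polyGrad (p : Poly2) (x : ℝ × ℝ) : ℝ × ℝ :=
  (pev (MvPolynomial.pderiv (0 : Fin 2) p) x, pev (MvPolynomial.pderiv (1 : Fin 2) p) x)

/-- `ρ` is a weight function on `Ω`. -/
def IsWeight (Ω : Set (ℝ × ℝ)) (ρ : ℝ × ℝ → ℝ) : Prop :=
  Measurable ρ ∧ (∀ᵐ x ∂(volume.restrict Ω), 0 < ρ x) ∧ IntegrableOn ρ Ω

/-- `ρ` is a moment weight function on `Ω`. -/
def IsMomentWeight (Ω : Set (ℝ × ℝ)) (ρ : ℝ × ℝ → ℝ) : Prop :=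
  Measurable ρ ∧ (∀ᵐ x ∂(volume.restrict Ω), 0 < ρ x) ∧
    ∀ m n : ℕ, IntegrableOn (fun x : ℝ × ℝ => |x.1| ^ m * |x.2| ^ n * ρ x) Ω

/-- `Φ` is symmetric and positive definite at every point of `Ω`. -/
def SymPosDef (Ω : Set (ℝ × ℝ)) (p11 p12 p21 p22 : Poly2) : Prop :=
  p12 = p21 ∧ ∀ x ∈ Ω, ∀ ζ : ℝ × ℝ, ζ ≠ 0 → 0 < bilPhi p11 p12 p21 p22 x ζ ζ

/-- `Φ` is symmetric, has entries of degree at most 2, and is positive definite on `Ω`. -/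
def GoodPhi (Ω : Set (ℝ × ℝ)) (p11 p12 p21 p22 : Poly2) : Prop :=
  SymPosDef Ω p11 p12 p21 p22 ∧ p11.totalDegree ≤ 2 ∧ p12.totalDegree ≤ 2 ∧
    p21.totalDegree ≤ 2 ∧ p22.totalDegree ≤ 2

/-- The Pearson equation `div(ρΦ) = ρ(ψ₁,ψ₂)` with explicit degree-one polynomials
`ψⱼ(x) = d_{j1} x₁ + d_{j2} x₂ + e_j` having linearly independent linear parts. -/
def PearsonWith (Ω : Set (ℝ × ℝ)) (ρ : ℝ × ℝ → ℝ) (p11 p12 p21 p22 : Poly2)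
    (d11 d12 d21 d22 e1 e2 : ℝ) : Prop :=
  ContDiffOn ℝ 1 ρ Ω ∧ d11 * d22 - d12 * d21 ≠ 0 ∧
    (∀ x ∈ Ω,
      fderiv ℝ (fun y => ρ y * pev p11 y) x (1, 0) +
        fderiv ℝ (fun y => ρ y * pev p21 y) x (0, 1) = ρ x * (d11 * x.1 + d12 * x.2 + e1)) ∧
    (∀ x ∈ Ω,
      fderiv ℝ (fun y => ρ y * pev p12 y) x (1, 0) +
        fderiv ℝ (fun y => ρ y * pev p22 y) x (0, 1) = ρ x * (d21 * x.1 + d22 * x.2 + e2))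

/-- The Pearson equation `div(ρΦ) = ρ(ψ₁,ψ₂)` for some admissible `ψ₁, ψ₂`. -/
def Pearson (Ω : Set (ℝ × ℝ)) (ρ : ℝ × ℝ → ℝ) (p11 p12 p21 p22 : Poly2) : Prop :=
  ∃ d11 d12 d21 d22 e1 e2 : ℝ, PearsonWith Ω ρ p11 p12 p21 p22 d11 d12 d21 d22 e1 e2

/-- `div(ρΦv)` for a pair of polynomials `v = (v1, v2)`. -/
def divRhoPhi (ρ : ℝ × ℝ → ℝ) (p11 p12 p21 p22 v1 v2 : Poly2) (x : ℝ × ℝ) : ℝ :=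
  fderiv ℝ (fun y => ρ y * (pev p11 y * pev v1 y + pev p12 y * pev v2 y)) x (1, 0) +
    fderiv ℝ (fun y => ρ y * (pev p21 y * pev v1 y + pev p22 y * pev v2 y)) x (0, 1)

/-- Membership in `L²(Ω, ρ)`. -/
def MemL2 (Ω : Set (ℝ × ℝ)) (ρ : ℝ × ℝ → ℝ) (u : ℝ × ℝ → ℝ) : Prop :=
  Measurable u ∧ IntegrableOn (fun x => u x ^ 2 * ρ x) Ω

/-- Membership in the matrix-weighted Lebesgue space `L²(Ω, ρΦ)`. -/
def MemL2M (Ω : Set (ℝ × ℝ)) (ρ : ℝ × ℝ → ℝ) (p11 p12 p21 p22 : Poly2)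
    (w : ℝ × ℝ → ℝ × ℝ) : Prop :=
  Measurable w ∧ IntegrableOn (fun x => ρ x * bilPhi p11 p12 p21 p22 x (w x) (w x)) Ω

/-- `h` is a weak gradient of `u`. -/
def IsWeakGrad (Ω : Set (ℝ × ℝ)) (ρ : ℝ × ℝ → ℝ) (p11 p12 p21 p22 : Poly2)
    (u : ℝ × ℝ → ℝ) (h : ℝ × ℝ → ℝ × ℝ) : Prop :=
  MemL2M Ω ρ p11 p12 p21 p22 h ∧
    ∀ v1 v2 : Poly2,
      ∫ x in Ω, u x * divRhoPhi ρ p11 p12 p21 p22 v1 v2 x =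
        - ∫ x in Ω, ρ x * bilPhi p11 p12 p21 p22 x (h x) (pev v1 x, pev v2 x)

/-- Membership in `W(Ω, ρ, ρΦ)`, the closure of the polynomials in `W^{1,2}(Ω, ρ, ρΦ)`,
for a function `u` with weak gradient `g`. -/
def MemW (Ω : Set (ℝ × ℝ)) (ρ : ℝ × ℝ → ℝ) (p11 p12 p21 p22 : Poly2)
    (u : ℝ × ℝ → ℝ) (g : ℝ × ℝ → ℝ × ℝ) : Prop :=
  MemL2 Ω ρ u ∧ IsWeakGrad Ω ρ p11 p12 p21 p22 u g ∧
    ∀ ε : ℝ, 0 < ε → ∃ q : Poly2,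
      (∫ x in Ω, (u x - pev q x) ^ 2 * ρ x) +
        (∫ x in Ω, ρ x * bilPhi p11 p12 p21 p22 x (g x - polyGrad q x) (g x - polyGrad q x))
          < ε ^ 2

/-- The polynomial function
`K = ψ₁v₁ + ψ₂v₂ + φ₁₁∂₁v₁ + φ₂₁∂₂v₁ + φ₁₂∂₁v₂ + φ₂₂∂₂v₂`. -/
def Kfun (p11 p12 p21 p22 v1 v2 : Poly2) (d11 d12 d21 d22 e1 e2 : ℝ) (x : ℝ × ℝ) : ℝ :=
  (d11 * x.1 + d12 * x.2 + e1) * pev v1 x + (d21 * x.1 + d22 * x.2 + e2) * pev v2 x +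
    pev p11 x * pev (MvPolynomial.pderiv (0 : Fin 2) v1) x +
    pev p21 x * pev (MvPolynomial.pderiv (1 : Fin 2) v1) x +
    pev p12 x * pev (MvPolynomial.pderiv (0 : Fin 2) v2) x +
    pev p22 x * pev (MvPolynomial.pderiv (1 : Fin 2) v2) x

/-- `div(u ρ Φ v)` for a scalar function `u` and a polynomial pair `v`. -/
def divURhoPhi (ρ u : ℝ × ℝ → ℝ) (p11 p12 p21 p22 v1 v2 : Poly2) (x : ℝ × ℝ) : ℝ :=
  fderiv ℝ (fun y => u y * (ρ y * (pev p11 y * pev v1 y + pev p12 y * pev v2 y))) x (1, 0) +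
    fderiv ℝ (fun y => u y * (ρ y * (pev p21 y * pev v1 y + pev p22 y * pev v2 y))) x (0, 1)

/-- The classical gradient of a `C¹` function. -/
def gradF (u : ℝ × ℝ → ℝ) (x : ℝ × ℝ) : ℝ × ℝ :=
  (fderiv ℝ u x (1, 0), fderiv ℝ u x (0, 1))

/-!
By the product rule, `div(u ρΦv) = u div(ρΦv) + ρ (∇u)ᵗΦv`, and the Pearson equation turns
`div(ρΦv)` into `Kρ`. Hence `div(u ρΦv) = (Ku)ρ + ρ (∇u)ᵗΦv` on `Ω`. The first term is estimated
by the Cauchy–Schwarz inequality in `L²(Ω,ρ)`, the second by the pointwise Cauchy–Schwarz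
inequality for `Φ` followed by the one for integrals; `K` and `v` lie in the relevant spaces since
`ρ` has all moments.
-/

section CauchySchwarz

variable {α : Type*} [MeasurableSpace α] {μ : Measure α} {f a b : α → ℝ}

theorem memLp_two_sqrt (ha : Integrable a μ) : MemLp (fun x => √(a x)) 2 μ := by
  rw [memLp_two_iff_integrable_sq (Real.continuous_sqrt.comp_aestronglyMeasurable ha.1)]
  simpa only [Real.sq_sqrt'] using ha.pos_part

theorem integral_sqrt_mul_sqrt_le (ha : Integrable a μ) (hb : Integrable b μ)
    (ha0 : 0 ≤ᵐ[μ] a) (hb0 : 0 ≤ᵐ[μ] b) :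
    ∫ x, √(a x) * √(b x) ∂μ ≤ √(∫ x, a x ∂μ) * √(∫ x, b x ∂μ) := by
  have integral_sqrt_sq {c : α → ℝ} (hc0 : 0 ≤ᵐ[μ] c) :
      ∫ x, √(c x) ^ (2 : ℝ) ∂μ = ∫ x, c x ∂μ := by
    refine integral_congr_ae ?_
    filter_upwards [hc0] with x hx
    rw [Real.rpow_two, Real.sq_sqrt hx]
  have holder := integral_mul_le_Lp_mul_Lq_of_nonneg Real.HolderConjugate.two_two
    (Eventually.of_forall fun x => Real.sqrt_nonneg (a x))
    (Eventually.of_forall fun x => Real.sqrt_nonneg (b x))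
    (by simpa using memLp_two_sqrt ha) (by simpa using memLp_two_sqrt hb)
  rwa [integral_sqrt_sq ha0, integral_sqrt_sq hb0, ← Real.sqrt_eq_rpow, ← Real.sqrt_eq_rpow]
    at holder

theorem integrable_of_sq_le_mul (hf : AEStronglyMeasurable f μ) (ha : Integrable a μ)
    (hb : Integrable b μ) (hfab : ∀ᵐ x ∂μ, f x ^ 2 ≤ a x * b x) : Integrable f μ := by
  refine (ha.abs.add hb.abs).mono' hf ?_
  filter_upwards [hfab] with x hx
  refine abs_le_of_sq_le_sq (hx.trans ?_) (add_nonneg (abs_nonneg _) (abs_nonneg _))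
  calc a x * b x ≤ |a x| * |b x| := (le_abs_self _).trans_eq (abs_mul _ _)
    _ ≤ (|a x| + |b x|) ^ 2 := by nlinarith [abs_nonneg (a x), abs_nonneg (b x)]

theorem integral_abs_le_of_sq_le_mul (ha : Integrable a μ) (hb : Integrable b μ)
    (ha0 : 0 ≤ᵐ[μ] a) (hb0 : 0 ≤ᵐ[μ] b) (hfab : ∀ᵐ x ∂μ, f x ^ 2 ≤ a x * b x) :
    ∫ x, |f x| ∂μ ≤ √(∫ x, a x ∂μ) * √(∫ x, b x ∂μ) := by
  refine le_trans ?_ (integral_sqrt_mul_sqrt_le ha hb ha0 hb0)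
  refine integral_mono_of_nonneg (Eventually.of_forall fun x => abs_nonneg (f x))
    ((memLp_two_sqrt ha).integrable_mul (memLp_two_sqrt hb)) ?_
  filter_upwards [hfab, ha0] with x hx hax
  exact (Real.abs_le_sqrt hx).trans_eq (Real.sqrt_mul hax _)

end CauchySchwarz

section Polynomials

theorem hasFDerivAt_mvPolynomial_eval {𝕜 σ : Type*} [NontriviallyNormedField 𝕜] [Fintype σ]
    (p : MvPolynomial σ 𝕜) (x : σ → 𝕜) :
    HasFDerivAt (fun y => MvPolynomial.eval y p)
      (∑ i, MvPolynomial.eval x (MvPolynomial.pderiv i p) •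
        (ContinuousLinearMap.proj i : (σ → 𝕜) →L[𝕜] 𝕜)) x := by
  classical
  induction p using MvPolynomial.induction_on with
  | C a =>
    simp only [MvPolynomial.eval_C]
    exact (hasFDerivAt_const a x).congr_fderiv (ContinuousLinearMap.ext fun h => by simp)
  | add p q hp hq =>
    simp only [map_add]
    refine (hp.fun_add hq).congr_fderiv (ContinuousLinearMap.ext fun h => ?_)
    simp [add_mul, Finset.sum_add_distrib]
  | mul_X p i hp =>
    simp only [MvPolynomial.eval_mul, MvPolynomial.eval_X]
    refine (hp.fun_mul (hasFDerivAt_apply i x)).congr_fderiv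
      (ContinuousLinearMap.ext fun h => ?_)
    simp [MvPolynomial.pderiv_X, Pi.single_apply, apply_ite, add_mul, Finset.sum_add_distrib,
      Finset.mul_sum, mul_assoc]

theorem integrable_mvPolynomial_eval_mul {α σ R : Type*} [MeasurableSpace α] [Fintype σ]
    [NormedCommRing R] {μ : Measure α} {g : α → σ → R} {w : α → R}
    (hg : ∀ s : σ →₀ ℕ, Integrable (fun x => (∏ i, g x i ^ s i) * w x) μ)
    (p : MvPolynomial σ R) : Integrable (fun x => MvPolynomial.eval (g x) p * w x) μ := by
  simp only [MvPolynomial.eval_eq', Finset.sum_mul, mul_assoc]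
  exact integrable_finsetSum _ fun s _ => (hg s).const_mul _

variable (p q : Poly2) (x : ℝ × ℝ)

@[simp]
theorem pev_add : pev (p + q) x = pev p x + pev q x := map_add _ _ _

@[simp]
theorem pev_mul : pev (p * q) x = pev p x * pev q x := map_mul _ _ _

@[simp]
theorem pev_C (c : ℝ) : pev (MvPolynomial.C c) x = c := MvPolynomial.eval_C _

@[simp]
theorem pev_X_zero : pev (MvPolynomial.X 0) x = x.1 := MvPolynomial.eval_X _

@[simp]
theorem pev_X_one : pev (MvPolynomial.X 1) x = x.2 := MvPolynomial.eval_X _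

theorem hasFDerivAt_pev :
    HasFDerivAt (pev p)
      ((polyGrad p x).1 • ContinuousLinearMap.fst ℝ ℝ ℝ +
        (polyGrad p x).2 • ContinuousLinearMap.snd ℝ ℝ ℝ) x := by
  have hvec : HasFDerivAt (fun y : ℝ × ℝ => ![y.1, y.2])
      (ContinuousLinearMap.pi ![ContinuousLinearMap.fst ℝ ℝ ℝ, ContinuousLinearMap.snd ℝ ℝ ℝ])
      x := by
    refine hasFDerivAt_pi.2 fun i => ?_
    fin_cases i
    exacts [hasFDerivAt_fst, hasFDerivAt_snd]
  refine ((hasFDerivAt_mvPolynomial_eval p _).comp x hvec).congr_fderiv ?_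
  ext <;> simp [polyGrad, pev]

@[fun_prop]
theorem differentiable_pev : Differentiable ℝ (pev p) :=
  fun x => (hasFDerivAt_pev p x).differentiableAt

@[fun_prop]
theorem measurable_pev : Measurable (pev p) :=
  (differentiable_pev p).continuous.measurable

theorem gradF_pev : gradF (pev p) x = polyGrad p x := by
  simp [gradF, (hasFDerivAt_pev p x).fderiv]

end Polynomials

section MatrixForm

variable {Ω : Set (ℝ × ℝ)} {p11 p12 p21 p22 : Poly2} {x : ℝ × ℝ}

/-- `Φ` is symmetric and positive semidefinite at every point of `Ω`, so that `bilPhi` satisfies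
the Cauchy–Schwarz inequality there. -/
def SymPosSemidef (Ω : Set (ℝ × ℝ)) (p11 p12 p21 p22 : Poly2) : Prop :=
  p12 = p21 ∧ ∀ x ∈ Ω, ∀ ζ : ℝ × ℝ, 0 ≤ bilPhi p11 p12 p21 p22 x ζ ζ

theorem SymPosDef.symPosSemidef (hΦ : SymPosDef Ω p11 p12 p21 p22) :
    SymPosSemidef Ω p11 p12 p21 p22 := by
  refine ⟨hΦ.1, fun x hx ζ => ?_⟩
  rcases eq_or_ne ζ 0 with rfl | hζ
  · simp [bilPhi]
  · exact (hΦ.2 x hx ζ hζ).le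

/-- `bilPhi` at the point `x`, bundled as a bilinear form, so that the algebraic Cauchy–Schwarz
inequality applies to it. -/
def bilPhiForm (p11 p12 p21 p22 : Poly2) (x : ℝ × ℝ) : LinearMap.BilinForm ℝ (ℝ × ℝ) :=
  LinearMap.mk₂ ℝ (bilPhi p11 p12 p21 p22 x)
    (fun _ _ _ => by simp only [bilPhi, Prod.fst_add, Prod.snd_add]; ring)
    (fun _ _ _ => by simp only [bilPhi, Prod.smul_fst, Prod.smul_snd, smul_eq_mul]; ring)
    (fun _ _ _ => by simp only [bilPhi, Prod.fst_add, Prod.snd_add]; ring)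
    (fun _ _ _ => by simp only [bilPhi, Prod.smul_fst, Prod.smul_snd, smul_eq_mul]; ring)

theorem SymPosSemidef.bilPhi_sq_le (hΦ : SymPosSemidef Ω p11 p12 p21 p22) (hx : x ∈ Ω)
    (ζ η : ℝ × ℝ) :
    bilPhi p11 p12 p21 p22 x ζ η ^ 2 ≤
      bilPhi p11 p12 p21 p22 x ζ ζ * bilPhi p11 p12 p21 p22 x η η := by
  have hsymm : LinearMap.IsSymm (bilPhiForm p11 p12 p21 p22 x) := by
    refine ⟨fun ζ η => ?_⟩
    simp only [bilPhiForm, LinearMap.mk₂_apply, bilPhi, hΦ.1, RingHom.id_apply]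
    ring
  exact (bilPhiForm p11 p12 p21 p22 x).apply_sq_le_of_symm (hΦ.2 x hx) hsymm ζ η

end MatrixForm

section WeightedSpaces

variable {Ω : Set (ℝ × ℝ)} {ρ f g : ℝ × ℝ → ℝ} {w z : ℝ × ℝ → ℝ × ℝ} {p11 p12 p21 p22 : Poly2}

theorem MemL2.integrableOn_mul_mul (hf : MemL2 Ω ρ f) (hg : MemL2 Ω ρ g) (hρ : Measurable ρ) :
    IntegrableOn (fun x => f x * g x * ρ x) Ω :=
  integrable_of_sq_le_mul ((hf.1.mul hg.1).mul hρ).aestronglyMeasurable hf.2 hg.2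
    (Eventually.of_forall fun x => le_of_eq (by ring))

theorem MemL2.integral_abs_mul_mul_le (hf : MemL2 Ω ρ f) (hg : MemL2 Ω ρ g)
    (hρ0 : ∀ᵐ x ∂volume.restrict Ω, 0 ≤ ρ x) :
    ∫ x in Ω, |f x * g x * ρ x| ≤
      √(∫ x in Ω, f x ^ 2 * ρ x) * √(∫ x in Ω, g x ^ 2 * ρ x) := by
  have sq_mul_nonneg (h : ℝ × ℝ → ℝ) : ∀ᵐ x ∂volume.restrict Ω, 0 ≤ h x ^ 2 * ρ x :=
    hρ0.mono fun x hx => mul_nonneg (sq_nonneg (h x)) hx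
  exact integral_abs_le_of_sq_le_mul hf.2 hg.2 (sq_mul_nonneg f) (sq_mul_nonneg g)
    (Eventually.of_forall fun x => le_of_eq (by ring))

theorem SymPosSemidef.ae_mul_bilPhi_sq_le (hΦ : SymPosSemidef Ω p11 p12 p21 p22)
    (hΩ : MeasurableSet Ω) (ρ : ℝ × ℝ → ℝ) (w z : ℝ × ℝ → ℝ × ℝ) :
    ∀ᵐ x ∂volume.restrict Ω, (ρ x * bilPhi p11 p12 p21 p22 x (w x) (z x)) ^ 2 ≤
      (ρ x * bilPhi p11 p12 p21 p22 x (w x) (w x)) *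
        (ρ x * bilPhi p11 p12 p21 p22 x (z x) (z x)) := by
  filter_upwards [ae_restrict_mem hΩ] with x hx
  rw [mul_pow, mul_mul_mul_comm, ← sq]
  exact mul_le_mul_of_nonneg_left (hΦ.bilPhi_sq_le hx _ _) (sq_nonneg _)

theorem measurable_bilPhi (hw : Measurable w) (hz : Measurable z) :
    Measurable fun x => bilPhi p11 p12 p21 p22 x (w x) (z x) := by
  unfold bilPhi
  fun_prop

theorem MemL2M.integrableOn_mul_bilPhi (hw : MemL2M Ω ρ p11 p12 p21 p22 w)
    (hz : MemL2M Ω ρ p11 p12 p21 p22 z) (hΦ : SymPosSemidef Ω p11 p12 p21 p22)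
    (hΩ : MeasurableSet Ω) (hρ : Measurable ρ) :
    IntegrableOn (fun x => ρ x * bilPhi p11 p12 p21 p22 x (w x) (z x)) Ω :=
  integrable_of_sq_le_mul (hρ.mul (measurable_bilPhi hw.1 hz.1)).aestronglyMeasurable hw.2 hz.2
    (hΦ.ae_mul_bilPhi_sq_le hΩ ρ w z)

theorem MemL2M.integral_abs_mul_bilPhi_le (hw : MemL2M Ω ρ p11 p12 p21 p22 w)
    (hz : MemL2M Ω ρ p11 p12 p21 p22 z) (hΦ : SymPosSemidef Ω p11 p12 p21 p22)
    (hΩ : MeasurableSet Ω) (hρ0 : ∀ᵐ x ∂volume.restrict Ω, 0 ≤ ρ x) :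
    ∫ x in Ω, |ρ x * bilPhi p11 p12 p21 p22 x (w x) (z x)| ≤
      √(∫ x in Ω, ρ x * bilPhi p11 p12 p21 p22 x (w x) (w x)) *
        √(∫ x in Ω, ρ x * bilPhi p11 p12 p21 p22 x (z x) (z x)) := by
  have mul_bilPhi_nonneg (y : ℝ × ℝ → ℝ × ℝ) :
      ∀ᵐ x ∂volume.restrict Ω, 0 ≤ ρ x * bilPhi p11 p12 p21 p22 x (y x) (y x) := by
    filter_upwards [hρ0, ae_restrict_mem hΩ] with x hρx hx
    exact mul_nonneg hρx (hΦ.2 x hx _)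
  exact integral_abs_le_of_sq_le_mul hw.2 hz.2 (mul_bilPhi_nonneg w) (mul_bilPhi_nonneg z)
    (hΦ.ae_mul_bilPhi_sq_le hΩ ρ w z)

theorem IsMomentWeight.integrableOn_pev_mul (hρ : IsMomentWeight Ω ρ) (p : Poly2) :
    IntegrableOn (fun x => pev p x * ρ x) Ω := by
  refine integrable_mvPolynomial_eval_mul (fun s => ?_) p
  have hρmeas : Measurable ρ := hρ.1
  have hmeas : Measurable fun x : ℝ × ℝ => x.1 ^ s 0 * x.2 ^ s 1 * ρ x := by fun_prop
  simp only [Fin.prod_univ_two, Matrix.cons_val_zero, Matrix.cons_val_one]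
  exact Integrable.mono (hρ.2.2 (s 0) (s 1)) hmeas.aestronglyMeasurable
    (Eventually.of_forall fun x => by simp)

theorem IsMomentWeight.memL2_pev (hρ : IsMomentWeight Ω ρ) (p : Poly2) : MemL2 Ω ρ (pev p) :=
  ⟨measurable_pev p, by simpa only [pev_mul, sq] using hρ.integrableOn_pev_mul (p * p)⟩

theorem IsMomentWeight.memL2M_pev (hρ : IsMomentWeight Ω ρ) (p11 p12 p21 p22 v1 v2 : Poly2) :
    MemL2M Ω ρ p11 p12 p21 p22 fun x => (pev v1 x, pev v2 x) := by
  refine ⟨by fun_prop, ?_⟩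
  simpa [bilPhi, mul_comm (ρ _)] using
    hρ.integrableOn_pev_mul (v1 * (p11 * v1 + p12 * v2) + v2 * (p21 * v1 + p22 * v2))

end WeightedSpaces

section Divergence

theorem fderiv_mul_add_mul_apply {𝕜 E : Type*} [NontriviallyNormedField 𝕜]
    [NormedAddCommGroup E] [NormedSpace 𝕜 E] {r a b v w : E → 𝕜} {x : E}
    (hr : DifferentiableAt 𝕜 r x) (ha : DifferentiableAt 𝕜 a x) (hb : DifferentiableAt 𝕜 b x)
    (hv : DifferentiableAt 𝕜 v x) (hw : DifferentiableAt 𝕜 w x) (e : E) :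
    fderiv 𝕜 (fun y => r y * (a y * v y + b y * w y)) x e =
      v x * fderiv 𝕜 (fun y => r y * a y) x e + w x * fderiv 𝕜 (fun y => r y * b y) x e +
        r x * (a x * fderiv 𝕜 v x e + b x * fderiv 𝕜 w x e) := by
  have hregroup : (fun y => r y * (a y * v y + b y * w y)) =
      fun y => r y * a y * v y + r y * b y * w y := by
    funext y
    ring
  rw [hregroup, fderiv_fun_add ((hr.fun_mul ha).fun_mul hv) ((hr.fun_mul hb).fun_mul hw),
    fderiv_fun_mul (hr.fun_mul ha) hv, fderiv_fun_mul (hr.fun_mul hb) hw]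
  simp only [add_apply, smul_apply, smul_eq_mul]
  ring

variable {Ω : Set (ℝ × ℝ)} {ρ u : ℝ × ℝ → ℝ} {p11 p12 p21 p22 ψ1 ψ2 : Poly2} {x : ℝ × ℝ}

/-- The Pearson equation `div(ρΦ) = ρ(ψ₁,ψ₂)` for a differentiable `ρ` on `Ω`, with polynomials
`ψ₁, ψ₂` of arbitrary degree. -/
def PearsonPoly (Ω : Set (ℝ × ℝ)) (ρ : ℝ × ℝ → ℝ) (p11 p12 p21 p22 ψ1 ψ2 : Poly2) : Prop :=
  DifferentiableOn ℝ ρ Ω ∧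
    (∀ x ∈ Ω,
      fderiv ℝ (fun y => ρ y * pev p11 y) x (1, 0) +
        fderiv ℝ (fun y => ρ y * pev p21 y) x (0, 1) = ρ x * pev ψ1 x) ∧
    (∀ x ∈ Ω,
      fderiv ℝ (fun y => ρ y * pev p12 y) x (1, 0) +
        fderiv ℝ (fun y => ρ y * pev p22 y) x (0, 1) = ρ x * pev ψ2 x)

/-- The polynomial `K` with `div(ρΦv) = Kρ`, for a Pearson equation with right-hand side
`ρ(ψ₁,ψ₂)`; it is `Kfun` when `ψ₁, ψ₂` have degree one. -/
def pearsonK (p11 p12 p21 p22 ψ1 ψ2 v1 v2 : Poly2) : Poly2 :=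
  ψ1 * v1 + ψ2 * v2 +
    p11 * MvPolynomial.pderiv 0 v1 + p21 * MvPolynomial.pderiv 1 v1 +
    p12 * MvPolynomial.pderiv 0 v2 + p22 * MvPolynomial.pderiv 1 v2

/-- The polynomial `a x₁ + b x₂ + c`, the form of `ψ₁` and `ψ₂` in `PearsonWith`. -/
def affinePoly (a b c : ℝ) : Poly2 :=
  MvPolynomial.C a * MvPolynomial.X 0 + MvPolynomial.C b * MvPolynomial.X 1 + MvPolynomial.C c

theorem pev_affinePoly (a b c : ℝ) (x : ℝ × ℝ) :
    pev (affinePoly a b c) x = a * x.1 + b * x.2 + c := by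
  simp [affinePoly]

theorem pev_pearsonK_affinePoly (p11 p12 p21 p22 v1 v2 : Poly2) (d11 d12 d21 d22 e1 e2 : ℝ)
    (x : ℝ × ℝ) :
    pev (pearsonK p11 p12 p21 p22 (affinePoly d11 d12 e1) (affinePoly d21 d22 e2) v1 v2) x =
      Kfun p11 p12 p21 p22 v1 v2 d11 d12 d21 d22 e1 e2 x := by
  simp [pearsonK, Kfun, pev_affinePoly]

theorem PearsonWith.pearsonPoly {d11 d12 d21 d22 e1 e2 : ℝ}
    (hP : PearsonWith Ω ρ p11 p12 p21 p22 d11 d12 d21 d22 e1 e2) :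
    PearsonPoly Ω ρ p11 p12 p21 p22 (affinePoly d11 d12 e1) (affinePoly d21 d22 e2) := by
  simp only [PearsonPoly, pev_affinePoly]
  exact ⟨hP.1.differentiableOn one_ne_zero, hP.2.2⟩

theorem divURhoPhi_eq_mul_divRhoPhi_add (hu : DifferentiableAt ℝ u x) (hρ : DifferentiableAt ℝ ρ x)
    (p11 p12 p21 p22 v1 v2 : Poly2) :
    divURhoPhi ρ u p11 p12 p21 p22 v1 v2 x =
      u x * divRhoPhi ρ p11 p12 p21 p22 v1 v2 x +
        ρ x * bilPhi p11 p12 p21 p22 x (gradF u x) (pev v1 x, pev v2 x) := by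
  have hflux (a b : Poly2) :
      DifferentiableAt ℝ (fun y => ρ y * (pev a y * pev v1 y + pev b y * pev v2 y)) x := by
    fun_prop
  simp only [divURhoPhi, divRhoPhi, bilPhi, gradF, fderiv_fun_mul hu (hflux _ _),
    add_apply, smul_apply, smul_eq_mul]
  ring

theorem PearsonPoly.divRhoPhi_eq (hP : PearsonPoly Ω ρ p11 p12 p21 p22 ψ1 ψ2) (hΩ : IsOpen Ω)
    (hx : x ∈ Ω) (v1 v2 : Poly2) :
    divRhoPhi ρ p11 p12 p21 p22 v1 v2 x =
      pev (pearsonK p11 p12 p21 p22 ψ1 ψ2 v1 v2) x * ρ x := by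
  obtain ⟨hρ, hψ1, hψ2⟩ := hP
  have hρx := hρ.differentiableAt (hΩ.mem_nhds hx)
  have hpev (q : Poly2) : DifferentiableAt ℝ (pev q) x := differentiable_pev q x
  have hpderiv (q : Poly2) := Prod.ext_iff.1 (gradF_pev q x)
  simp only [gradF, polyGrad] at hpderiv
  simp only [divRhoPhi, fderiv_mul_add_mul_apply hρx (hpev _) (hpev _) (hpev _) (hpev _),
    pearsonK, pev_add, pev_mul, (hpderiv _).1, (hpderiv _).2]
  linear_combination pev v1 x * hψ1 x hx + pev v2 x * hψ2 x hx

theorem PearsonPoly.divURhoPhi_eq (hP : PearsonPoly Ω ρ p11 p12 p21 p22 ψ1 ψ2) (hΩ : IsOpen Ω)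
    (hu : DifferentiableOn ℝ u Ω) (hx : x ∈ Ω) (v1 v2 : Poly2) :
    divURhoPhi ρ u p11 p12 p21 p22 v1 v2 x =
      pev (pearsonK p11 p12 p21 p22 ψ1 ψ2 v1 v2) x * u x * ρ x +
        ρ x * bilPhi p11 p12 p21 p22 x (gradF u x) (pev v1 x, pev v2 x) := by
  have hΩx := hΩ.mem_nhds hx
  rw [divURhoPhi_eq_mul_divRhoPhi_add (hu.differentiableAt hΩx) (hP.1.differentiableAt hΩx),
    hP.divRhoPhi_eq hΩ hx]
  ring

end Divergence

theorem divURhoPhi_integrable_and_bound_general {Ω : Set (ℝ × ℝ)} (hΩ : IsOpen Ω)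
    {ρ : ℝ × ℝ → ℝ} (hρ : IsMomentWeight Ω ρ) {p11 p12 p21 p22 ψ1 ψ2 : Poly2}
    (hΦ : SymPosSemidef Ω p11 p12 p21 p22) (hP : PearsonPoly Ω ρ p11 p12 p21 p22 ψ1 ψ2)
    {u : ℝ × ℝ → ℝ} (hu : DifferentiableOn ℝ u Ω) (huL2 : MemL2 Ω ρ u)
    (hgrad : MemL2M Ω ρ p11 p12 p21 p22 (gradF u)) (v1 v2 : Poly2) :
    IntegrableOn (fun x => divURhoPhi ρ u p11 p12 p21 p22 v1 v2 x) Ω ∧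
    (∫ x in Ω, |divURhoPhi ρ u p11 p12 p21 p22 v1 v2 x|) ≤
      √(∫ x in Ω, pev (pearsonK p11 p12 p21 p22 ψ1 ψ2 v1 v2) x ^ 2 * ρ x) *
          √(∫ x in Ω, u x ^ 2 * ρ x) +
        √(∫ x in Ω, ρ x * bilPhi p11 p12 p21 p22 x (gradF u x) (gradF u x)) *
          √(∫ x in Ω,
            ρ x * bilPhi p11 p12 p21 p22 x (pev v1 x, pev v2 x) (pev v1 x, pev v2 x)) := by
  set K := pearsonK p11 p12 p21 p22 ψ1 ψ2 v1 v2
  have hρ0 : ∀ᵐ x ∂volume.restrict Ω, 0 ≤ ρ x := hρ.2.1.mono fun _ => le_of_lt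
  have hK := hρ.memL2_pev K
  have hv := hρ.memL2M_pev p11 p12 p21 p22 v1 v2
  have hdiv : Set.EqOn (divURhoPhi ρ u p11 p12 p21 p22 v1 v2) (fun x => pev K x * u x * ρ x +
      ρ x * bilPhi p11 p12 p21 p22 x (gradF u x) (pev v1 x, pev v2 x)) Ω :=
    fun x hx => hP.divURhoPhi_eq hΩ hu hx v1 v2
  have hint_K := hK.integrableOn_mul_mul huL2 hρ.1
  have hint_grad := hgrad.integrableOn_mul_bilPhi hv hΦ hΩ.measurableSet hρ.1
  refine ⟨(hint_K.add hint_grad).congr_fun hdiv.symm hΩ.measurableSet, ?_⟩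
  calc ∫ x in Ω, |divURhoPhi ρ u p11 p12 p21 p22 v1 v2 x|
      = ∫ x in Ω, |pev K x * u x * ρ x +
          ρ x * bilPhi p11 p12 p21 p22 x (gradF u x) (pev v1 x, pev v2 x)| :=
        setIntegral_congr_fun hΩ.measurableSet fun x hx => congrArg abs (hdiv hx)
    _ ≤ ∫ x in Ω, (|pev K x * u x * ρ x| +
          |ρ x * bilPhi p11 p12 p21 p22 x (gradF u x) (pev v1 x, pev v2 x)|) :=
        integral_mono (hint_K.add hint_grad).abs (hint_K.abs.add hint_grad.abs)
          fun x => abs_add_le _ _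
    _ = (∫ x in Ω, |pev K x * u x * ρ x|) +
          ∫ x in Ω, |ρ x * bilPhi p11 p12 p21 p22 x (gradF u x) (pev v1 x, pev v2 x)| :=
        integral_add hint_K.abs hint_grad.abs
    _ ≤ _ := add_le_add (hK.integral_abs_mul_mul_le huL2 hρ0)
        (hgrad.integral_abs_mul_bilPhi_le hv hΦ hΩ.measurableSet hρ0)

/-- For `u` of class `C¹` with `u ∈ L²(Ω,ρ)` and `∇u ∈ L²(Ω,ρΦ)`,
`div(u ρΦ v)` is integrable on `Ω` and
`∫_Ω |div(u ρΦ v)| ≤ C ‖u‖_{2,ρ} + ‖∇u‖_{2,ρΦ} ‖v‖_{2,ρΦ}`. -/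
theorem divURhoPhi_integrable_and_bound (Ω : Set (ℝ × ℝ)) (hΩopen : IsOpen Ω)
    (hΩne : Ω.Nonempty)
    (ρ : ℝ × ℝ → ℝ) (hρ : IsMomentWeight Ω ρ)
    (p11 p12 p21 p22 : Poly2) (hΦ : GoodPhi Ω p11 p12 p21 p22)
    (d11 d12 d21 d22 e1 e2 : ℝ)
    (hP : PearsonWith Ω ρ p11 p12 p21 p22 d11 d12 d21 d22 e1 e2)
    (u : ℝ × ℝ → ℝ) (huC1 : ContDiffOn ℝ 1 u Ω) (huL2 : MemL2 Ω ρ u)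
    (hgrad : MemL2M Ω ρ p11 p12 p21 p22 (gradF u)) (v1 v2 : Poly2) :
    IntegrableOn (fun x => divURhoPhi ρ u p11 p12 p21 p22 v1 v2 x) Ω ∧
    (∫ x in Ω, |divURhoPhi ρ u p11 p12 p21 p22 v1 v2 x|) ≤
      Real.sqrt (∫ x in Ω, Kfun p11 p12 p21 p22 v1 v2 d11 d12 d21 d22 e1 e2 x ^ 2 * ρ x) *
          Real.sqrt (∫ x in Ω, u x ^ 2 * ρ x) +
        Real.sqrt (∫ x in Ω, ρ x * bilPhi p11 p12 p21 p22 x (gradF u x) (gradF u x)) *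
          Real.sqrt (∫ x in Ω,
            ρ x * bilPhi p11 p12 p21 p22 x (pev v1 x, pev v2 x) (pev v1 x, pev v2 x)) := by
  simpa only [pev_pearsonK_affinePoly] using divURhoPhi_integrable_and_bound_general hΩopen hρ
    hΦ.1.symPosSemidef hP.pearsonPoly (huC1.differentiableOn one_ne_zero) huL2 hgrad v1 v2
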